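/- Let λ₁, λ₂ ∈ ℂ with λ₁ ∉ {0, 3/2, −3/2} and λ₂ ∉ {0, 3/2, −3/2}. Then the following are equivalent: (i) there exist a, c ∈ ℂ with a ≠ 0 such that the affine map h(z) = a·z + c maps the three-element set {−1/2 − λ₁, λ₁ − 1/2, 1} onto the set {−1/2 − λ₂, λ₂ − 1/2, 1}; (ii) there exist a, c ∈ ℂ with a ≠ 0 such that for every z ∈ ℂ with 3z² − (λ₁² + 3/4) ≠ 0, one has 3(a·z + c)² − (λ₂² + 3/4) ≠ 0 and N_{λ₂}(a·z + c) = a·N_{λ₁}(z) + c. In other words, N_{λ₁} and N_{λ₂} are conjugate by an affine map of ℂ if and only if some affine map carries the root set of P_{λ₁} onto the root set of P_{λ₂}. -/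

import Mathlib

/-! The Newton map of a polynomial is unchanged when the polynomial is multiplied by a nonzero
constant, and precomposing `Q` with an affine map `h` turns the Newton map of `Q` into its conjugate
by `h`. If `h` carries the roots of `P`, which are simple, to roots of `Q`, then `P ∣ Q ∘ h`, and
comparing degrees `Q ∘ h` is a constant multiple of `P`, so `h` conjugates the Newton maps.
Conversely the fixed points of a Newton map away from the critical points are the roots, so a
conjugacy carries roots to roots, and a count shows that it does so surjectively. -/

open Polynomial Set

section NewtonMap

variable {R S : Type*} [CommRing R] [CommRing S] [Algebra R S]

lemma newtonMap_C_mul {k : R} (hk : IsUnit k) (P : R[X]) (x : S) :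
    (C k * P).newtonMap x = P.newtonMap x := by
  have hk' : Ring.inverse (algebraMap R S k) * algebraMap R S k = 1 :=
    Ring.inverse_mul_cancel _ (hk.map _)
  simp only [newtonMap_apply, derivative_C_mul, map_mul, aeval_C, Ring.mul_inverse_rev]
  linear_combination -Ring.inverse (aeval x (derivative P)) * aeval x P * hk'

lemma newtonMap_affine {a : R} (ha : IsUnit a) (c : R) (Q : R[X]) (x : S) :
    Q.newtonMap (algebraMap R S a * x + algebraMap R S c) =
      algebraMap R S a * (Q.comp (C a * X + C c)).newtonMap x + algebraMap R S c := by
  have ha' : algebraMap R S a * Ring.inverse (algebraMap R S a) = 1 :=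
    Ring.mul_inverse_cancel _ (ha.map _)
  have haeval (p : R[X]) : aeval x (p.comp (C a * X + C c)) =
      aeval (algebraMap R S a * x + algebraMap R S c) p := by
    simp [aeval_comp]
  have hder : derivative (Q.comp (C a * X + C c)) = C a * (derivative Q).comp (C a * X + C c) := by
    simp [derivative_comp]
  simp only [newtonMap_apply, hder, map_mul, aeval_C, haeval, Ring.mul_inverse_rev]
  linear_combination Ring.inverse (aeval (algebraMap R S a * x + algebraMap R S c) (derivative Q)) *
    aeval (algebraMap R S a * x + algebraMap R S c) Q * ha'

end NewtonMap

section AffineConjugacy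

variable {K : Type*} [Field K] {P Q : K[X]} {a : K}

lemma image_rootSet_eq_iff_mapsTo {f : K → K} (hf : f.Injective) (hsep : P.Separable)
    (hsplit : P.Splits) (hdeg : Q.natDegree ≤ P.natDegree) :
    f '' P.rootSet K = Q.rootSet K ↔ MapsTo f (P.rootSet K) (Q.rootSet K) := by
  refine ⟨fun h => mapsTo_iff_image_subset.mpr h.subset, fun h => ?_⟩
  refine eq_of_subset_of_ncard_le h.image_subset ?_ (rootSet_finite Q K)
  calc (Q.rootSet K).ncard ≤ Q.natDegree := ncard_rootSet_le Q K
    _ ≤ P.natDegree := hdeg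
    _ = (P.rootSet K).ncard := by
      rw [← card_rootSet_eq_natDegree hsep (hsplit.map (algebraMap K K)),
        ← Nat.card_eq_fintype_card, Nat.card_coe_set_eq]
    _ = (f '' P.rootSet K).ncard := (ncard_image_of_injective _ hf).symm

lemma associated_comp_affine_of_mapsTo_rootSet (ha : a ≠ 0) (c : K) (hsep : P.Separable)
    (hsplit : P.Splits) (hQ : Q ≠ 0) (hdeg : Q.natDegree ≤ P.natDegree)
    (h : MapsTo (fun z => a * z + c) (P.rootSet K) (Q.rootSet K)) :
    Associated P (Q.comp (C a * X + C c)) := by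
  have hcomp : Q.comp (C a * X + C c) ≠ 0 := by
    rw [← leadingCoeff_ne_zero, leadingCoeff_comp (by simp [natDegree_linear ha])]
    simp [ha, hQ]
  have hroots : P.roots ≤ (Q.comp (C a * X + C c)).roots := by
    refine (Multiset.le_iff_subset (nodup_roots hsep)).mpr fun r hr => ?_
    have hr' : r ∈ P.rootSet K := by simpa [mem_rootSet] using hr
    simpa [hcomp] using aeval_eq_zero_of_mem_rootSet (h hr')
  refine associated_of_dvd_of_natDegree_le (hsplit.dvd_of_roots_le_roots hsep.ne_zero hroots)
    hcomp ?_
  rwa [natDegree_comp, natDegree_linear ha, mul_one]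

lemma mapsTo_rootSet_iff_newtonMap_conj (ha : a ≠ 0) (c : K) (hsep : P.Separable)
    (hsplit : P.Splits) (hQ : Q ≠ 0) (hdeg : Q.natDegree ≤ P.natDegree) :
    MapsTo (fun z => a * z + c) (P.rootSet K) (Q.rootSet K) ↔
      ∀ z, (derivative P).eval z ≠ 0 → (derivative Q).eval (a * z + c) ≠ 0 ∧
        Q.newtonMap (a * z + c) = a * P.newtonMap z + c := by
  constructor
  · intro h z hz
    obtain ⟨u, hu⟩ := associated_comp_affine_of_mapsTo_rootSet ha c hsep hsplit hQ hdeg h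
    obtain ⟨k, hk, hku⟩ := Polynomial.isUnit_iff.mp u.isUnit
    have hQP : Q.comp (C a * X + C c) = C k * P := by rw [← hu, ← hku, mul_comm]
    constructor
    · have hder : a * (derivative Q).eval (a * z + c) = k * (derivative P).eval z := by
        simpa [derivative_comp] using congrArg (fun p => (derivative p).eval z) hQP
      exact right_ne_zero_of_mul (hder ▸ mul_ne_zero hk.ne_zero hz)
    · simpa [hQP, newtonMap_C_mul hk] using newtonMap_affine ha.isUnit c Q z
  · intro h r hr
    have hPr : aeval r P = 0 := aeval_eq_zero_of_mem_rootSet hr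
    obtain ⟨hQ', hconj⟩ := h r (by simpa using hsep.aeval_derivative_ne_zero hPr)
    rw [(isFixedPt_newtonMap_of_aeval_eq_zero hPr).eq] at hconj
    have hQr : aeval (a * r + c) Q = 0 :=
      (isFixedPt_newtonMap_of_isUnit_iff (by simpa using hQ')).mp hconj
    exact mem_rootSet.mpr ⟨hQ, hQr⟩

theorem image_rootSet_eq_iff_newtonMap_conj (ha : a ≠ 0) (c : K) (hsep : P.Separable)
    (hsplit : P.Splits) (hQ : Q ≠ 0) (hdeg : Q.natDegree ≤ P.natDegree) :
    (fun z => a * z + c) '' P.rootSet K = Q.rootSet K ↔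
      ∀ z, (derivative P).eval z ≠ 0 → (derivative Q).eval (a * z + c) ≠ 0 ∧
        Q.newtonMap (a * z + c) = a * P.newtonMap z + c :=
  (image_rootSet_eq_iff_mapsTo ((add_left_injective c).comp (mul_right_injective₀ ha)) hsep hsplit
    hdeg).trans (mapsTo_rootSet_iff_newtonMap_conj ha c hsep hsplit hQ hdeg)

end AffineConjugacy

/-- The cubic `P_λ` with roots `-1 / 2 - λ`, `λ - 1 / 2` and `1`, whose Newton map is `N_λ`. It is
defined in factored form so that it visibly splits. -/
noncomputable def newtonCubic {K : Type*} [Field K] (lam : K) : K[X] :=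
  (X - C (-1 / 2 - lam)) * (X - C (lam - 1 / 2)) * (X - C 1)

section NewtonCubic

variable {K : Type*} [Field K]

lemma monic_newtonCubic (lam : K) : (newtonCubic lam).Monic :=
  ((monic_X_sub_C _).mul (monic_X_sub_C _)).mul (monic_X_sub_C _)

lemma natDegree_newtonCubic (lam : K) : (newtonCubic lam).natDegree = 3 := by
  unfold newtonCubic
  compute_degree!

lemma splits_newtonCubic (lam : K) : (newtonCubic lam).Splits :=
  ((Splits.X_sub_C _).mul (Splits.X_sub_C _)).mul (Splits.X_sub_C _)

lemma rootSet_newtonCubic (lam : K) :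
    (newtonCubic lam).rootSet K = {-1 / 2 - lam, lam - 1 / 2, 1} := by
  ext z
  rw [mem_rootSet_of_ne (monic_newtonCubic lam).ne_zero, coe_aeval_eq_eval]
  simp [newtonCubic, sub_eq_zero, or_assoc]

variable [NeZero (2 : K)]

lemma separable_newtonCubic {lam : K} (h : lam ∉ ({0, 3 / 2, -3 / 2} : Set K)) :
    (newtonCubic lam).Separable := by
  simp only [mem_insert_iff, mem_singleton_iff, not_or] at h
  obtain ⟨hzero, hpos, hneg⟩ := h
  have coprime {x y : K} (hxy : x ≠ y) : IsCoprime (X - C x) (X - C y) :=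
    isCoprime_X_sub_C_of_isUnit_sub (sub_ne_zero.mpr hxy).isUnit
  have two : (2 : K) ≠ 0 := two_ne_zero
  have h12 : -1 / 2 - lam ≠ lam - 1 / 2 := fun e => hzero (by grind)
  have h13 : -1 / 2 - lam ≠ 1 := fun e => hneg (by grind)
  have h23 : lam - 1 / 2 ≠ 1 := fun e => hpos (by grind)
  exact (separable_X_sub_C.mul separable_X_sub_C (coprime h12)).mul separable_X_sub_C
    ((coprime h13).mul_left (coprime h23))

lemma newtonCubic_eq (lam : K) :
    newtonCubic lam = X ^ 3 - C (lam ^ 2 + 3 / 4) * X + C (lam ^ 2 - 1 / 4) := by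
  have two : (2 : K) ≠ 0 := two_ne_zero
  have h34 : (3 / 4 : K) = 3 * (1 / 2) ^ 2 := by grind
  have h14 : (1 / 4 : K) = (1 / 2) ^ 2 := by grind
  have half : 2 * C (1 / 2 : K) = 1 := by
    rw [← C_ofNat, ← C_mul, mul_one_div_cancel two, C_1]
  rw [newtonCubic, h34, h14, neg_div]
  simp only [C_add, C_sub, C_neg, C_mul, C_pow, C_1, C_ofNat]
  linear_combination (X ^ 2 + 2 * C (1 / 2) * X) * half

lemma eval_derivative_newtonCubic (lam z : K) :
    (derivative (newtonCubic lam)).eval z = 3 * z ^ 2 - (lam ^ 2 + 3 / 4) := by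
  rw [newtonCubic_eq, derivative_add, derivative_sub, derivative_X_pow, derivative_C_mul,
    derivative_X, derivative_C]
  simp

lemma newtonMap_newtonCubic {lam z : K} (hz : 3 * z ^ 2 - (lam ^ 2 + 3 / 4) ≠ 0) :
    (newtonCubic lam).newtonMap z =
      (2 * z ^ 3 - (lam ^ 2 - 1 / 4)) / (3 * z ^ 2 - (lam ^ 2 + 3 / 4)) := by
  rw [newtonMap_apply, coe_aeval_eq_eval, eval_derivative_newtonCubic, Ring.inverse_eq_inv',
    eq_div_iff hz, sub_mul, mul_right_comm, inv_mul_cancel₀ hz, newtonCubic_eq]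
  simp only [eval_add, eval_sub, eval_mul, eval_pow, eval_X, eval_C]
  ring

end NewtonCubic

theorem newton_cubic_affine_conjugacy_general {K : Type*} [Field K] [NeZero (2 : K)] {lam₁ : K}
    (h₁ : lam₁ ∉ ({0, 3 / 2, -3 / 2} : Set K)) (lam₂ : K) :
    (∃ a c : K, a ≠ 0 ∧
        (fun z : K => a * z + c) '' ({-1 / 2 - lam₁, lam₁ - 1 / 2, 1} : Set K)
          = ({-1 / 2 - lam₂, lam₂ - 1 / 2, 1} : Set K)) ↔
    (∃ a c : K, a ≠ 0 ∧ ∀ z : K, 3 * z ^ 2 - (lam₁ ^ 2 + 3 / 4) ≠ 0 →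
        3 * (a * z + c) ^ 2 - (lam₂ ^ 2 + 3 / 4) ≠ 0 ∧
        (2 * (a * z + c) ^ 3 - (lam₂ ^ 2 - 1 / 4)) / (3 * (a * z + c) ^ 2 - (lam₂ ^ 2 + 3 / 4))
          = a * ((2 * z ^ 3 - (lam₁ ^ 2 - 1 / 4)) / (3 * z ^ 2 - (lam₁ ^ 2 + 3 / 4))) + c) := by
  refine exists₂_congr fun a c => and_congr_right fun ha => ?_
  rw [← rootSet_newtonCubic, ← rootSet_newtonCubic, image_rootSet_eq_iff_newtonMap_conj ha c
    (separable_newtonCubic h₁) (splits_newtonCubic lam₁) (monic_newtonCubic lam₂).ne_zero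
    (by rw [natDegree_newtonCubic, natDegree_newtonCubic])]
  simp only [eval_derivative_newtonCubic]
  refine forall₂_congr fun z hz => and_congr_right fun hz' => ?_
  rw [newtonMap_newtonCubic hz, newtonMap_newtonCubic hz']

/-- For `λ₁, λ₂ ∉ {0, 3/2, -3/2}`, the cubic Newton maps `N_{λ₁}` and `N_{λ₂}` are conjugate
by an affine map of `ℂ` if and only if some affine map carries the root set of `P_{λ₁}`
onto the root set of `P_{λ₂}`. -/
theorem newton_cubic_affine_conjugacy (lam₁ lam₂ : ℂ)
    (h₁ : lam₁ ∉ ({0, 3/2, -3/2} : Set ℂ)) (h₂ : lam₂ ∉ ({0, 3/2, -3/2} : Set ℂ)) :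
    (∃ a c : ℂ, a ≠ 0 ∧
        (fun z : ℂ => a * z + c) '' ({-1/2 - lam₁, lam₁ - 1/2, 1} : Set ℂ)
          = ({-1/2 - lam₂, lam₂ - 1/2, 1} : Set ℂ)) ↔
    (∃ a c : ℂ, a ≠ 0 ∧ ∀ z : ℂ, 3 * z ^ 2 - (lam₁ ^ 2 + 3/4) ≠ 0 →
        3 * (a * z + c) ^ 2 - (lam₂ ^ 2 + 3/4) ≠ 0 ∧
        (2 * (a * z + c) ^ 3 - (lam₂ ^ 2 - 1/4)) / (3 * (a * z + c) ^ 2 - (lam₂ ^ 2 + 3/4))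
          = a * ((2 * z ^ 3 - (lam₁ ^ 2 - 1/4)) / (3 * z ^ 2 - (lam₁ ^ 2 + 3/4))) + c) :=
  newton_cubic_affine_conjugacy_general h₁ lam₂
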